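/- arXiv:2501.13930 — 7 statements merged into one kernel-verified Lean document; each statement's English description precedes it below -/
import Mathlib

section
/- Two configurations n, n' : {1,…,L} → {0,1,2} of the spin-1 breakdown chain are connected by a finite sequence of elementary breakdown moves if and only if they have the same charge, i.e. Σ_{i=1}^{L} 2^{i-1} n_i = Σ_{i=1}^{L} 2^{i-1} n'_i. In particular, the dynamics is fully ergodic within each charge sector, so the Krylov sectors of the spin-1 breakdown model are exactly the charge sectors. -/
/-!
Each move trades charge `2 * 2^i` at site `i` for charge `2^(i+1)` at site `i + 1`, so the charge is
conserved. Conversely, induct on the length of the chain, splitting off the first site: configurations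
of equal charge have first entries of equal parity. If these entries agree, the remainders have the
same charge and are connected by induction. Otherwise they are `2` and `0`, and the remainder behind
the `0` has positive charge. Such a `0` can always be turned into a `2` by moves
(`exists_raise`: pull a particle from the nearest occupied site down to the first site), which
reduces to the case of equal first entries.
-/

/-- The charge of a spin-1 breakdown configuration `n : Fin L → Fin 3`
(sites indexed `0, …, L-1`, so the site at index `i` carries weight `2^i`). -/
def breakdownCharge (L : ℕ) (n : Fin L → Fin 3) : ℕ :=
  ∑ i : Fin L, 2 ^ (i : ℕ) * (n i : ℕ)

/-- An elementary breakdown move: replace `(n_i, n_{i+1}) = (2, b)` by `(0, b+1)` for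
some `b ∈ {0,1}` at a pair of adjacent sites, or conversely replace `(0, b+1)` by
`(2, b)`; all other sites are unchanged. -/
def breakdownMove (L : ℕ) (n n' : Fin L → Fin 3) : Prop :=
  ∃ i j : Fin L, (i : ℕ) + 1 = (j : ℕ) ∧
    (∀ k : Fin L, k ≠ i → k ≠ j → n' k = n k) ∧
    (((n i : ℕ) = 2 ∧ (n j : ℕ) < 2 ∧ (n' i : ℕ) = 0 ∧ (n' j : ℕ) = (n j : ℕ) + 1) ∨
     ((n i : ℕ) = 0 ∧ 1 ≤ (n j : ℕ) ∧ (n' i : ℕ) = 2 ∧ (n' j : ℕ) + 1 = (n j : ℕ)))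

lemma breakdownMove_symm {L : ℕ} {n n' : Fin L → Fin 3} (h : breakdownMove L n n') :
    breakdownMove L n' n := by
  obtain ⟨i, j, hij, hk, h⟩ := h
  refine ⟨i, j, hij, fun k h1 h2 => (hk k h1 h2).symm, ?_⟩
  have := (n' j).isLt
  omega

lemma breakdownConn_symm {L : ℕ} {n n' : Fin L → Fin 3}
    (h : Relation.ReflTransGen (breakdownMove L) n n') :
    Relation.ReflTransGen (breakdownMove L) n' n := by
  induction h with
  | refl => exact .refl
  | tail _ h ih => exact .head (breakdownMove_symm h) ih

lemma breakdownCharge_cons {L : ℕ} (a : Fin 3) (m : Fin L → Fin 3) :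
    breakdownCharge (L + 1) (Fin.cons a m) = a + 2 * breakdownCharge L m := by
  simp [breakdownCharge, Fin.sum_univ_succ, Finset.mul_sum, pow_succ', mul_assoc]

lemma breakdownCharge_eq_of_move {L : ℕ} {n n' : Fin L → Fin 3} (h : breakdownMove L n n') :
    breakdownCharge L n = breakdownCharge L n' := by
  obtain ⟨i, j, hij, hk, h⟩ := h
  have hne : j ≠ i := by rintro rfl; omega
  have hj : j ∈ Finset.univ.erase i := by simp [hne]
  unfold breakdownCharge
  rw [← Finset.add_sum_erase _ _ (Finset.mem_univ i), ← Finset.add_sum_erase _ _ hj,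
    ← Finset.add_sum_erase _ (fun k : Fin L => 2 ^ (k : ℕ) * (n' k : ℕ)) (Finset.mem_univ i),
    ← Finset.add_sum_erase _ (fun k : Fin L => 2 ^ (k : ℕ) * (n' k : ℕ)) hj, ← add_assoc, ← add_assoc]
  congr 1
  · rw [← hij, pow_succ]
    rcases h with ⟨h1, -, h2, h3⟩ | ⟨h1, -, h2, h3⟩
    · rw [h1, h2, h3]; ring
    · rw [h1, h2, ← h3]; ring
  · refine Finset.sum_congr rfl fun k hmem => ?_
    simp only [Finset.mem_erase] at hmem
    rw [hk k hmem.2.1 hmem.1]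

lemma breakdownMove_cons {L : ℕ} (a : Fin 3) {m m' : Fin L → Fin 3} (h : breakdownMove L m m') :
    breakdownMove (L + 1) (Fin.cons a m) (Fin.cons a m') := by
  obtain ⟨i, j, hij, hk, h⟩ := h
  refine ⟨i.succ, j.succ, by simp [hij], fun k => ?_, by simpa using h⟩
  refine Fin.cases (by simp) (fun k h1 h2 => ?_) k
  simpa using hk k (by simpa using h1) (by simpa using h2)

lemma breakdownConn_cons {L : ℕ} (a : Fin 3) {m m' : Fin L → Fin 3}
    (h : Relation.ReflTransGen (breakdownMove L) m m') :
    Relation.ReflTransGen (breakdownMove (L + 1)) (Fin.cons a m) (Fin.cons a m') := by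
  induction h with
  | refl => exact .refl
  | tail _ h ih => exact ih.tail (breakdownMove_cons a h)

lemma breakdownMove_zero_two {L : ℕ} {b c : Fin 3} (hbc : (c : ℕ) + 1 = b) (r : Fin L → Fin 3) :
    breakdownMove (L + 2) (Fin.cons 0 (Fin.cons b r : Fin (L + 1) → Fin 3))
      (Fin.cons 2 (Fin.cons c r : Fin (L + 1) → Fin 3)) := by
  refine ⟨0, Fin.succ 0, by simp, fun k => ?_, Or.inr ?_⟩
  · refine Fin.cases (by simp) (fun k => ?_) k
    refine Fin.cases (by simp) (fun k _ _ => by simp) k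
  · simp only [Fin.cons_zero, Fin.cons_succ]
    exact ⟨rfl, by omega, rfl, hbc⟩

/-- An empty first site can be filled with two particles as soon as the rest of the chain is
not empty. -/
lemma exists_raise {L : ℕ} (m : Fin L → Fin 3) (hm : 0 < breakdownCharge L m) :
    ∃ p : Fin L → Fin 3,
      Relation.ReflTransGen (breakdownMove (L + 1)) (Fin.cons 0 m) (Fin.cons 2 p) := by
  induction L with
  | zero => simp [breakdownCharge] at hm
  | succ L ih =>
    obtain ⟨b, r, rfl⟩ : ∃ b r, m = Fin.cons b r :=
      ⟨m 0, Fin.tail m, (Fin.cons_self_tail m).symm⟩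
    rw [breakdownCharge_cons] at hm
    by_cases hb : (b : ℕ) = 0
    · obtain rfl : b = 0 := Fin.ext hb
      obtain ⟨p, hp⟩ := ih r (by omega)
      exact ⟨_, (breakdownConn_cons 0 hp).tail
        (breakdownMove_zero_two (b := 2) (c := 1) rfl p)⟩
    · have := b.isLt
      exact ⟨_, .single (breakdownMove_zero_two (b := b) (c := ⟨b - 1, by omega⟩)
        (by simp only; omega) r)⟩

lemma breakdownCharge_eq_of_conn {L : ℕ} {n n' : Fin L → Fin 3}
    (h : Relation.ReflTransGen (breakdownMove L) n n') :
    breakdownCharge L n = breakdownCharge L n' := by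
  induction h with
  | refl => rfl
  | tail _ h ih => exact ih.trans (breakdownCharge_eq_of_move h)

/-- The inductive step when the first entries are `2` and `0`. -/
lemma breakdownConn_two_zero {L : ℕ}
    (ih : ∀ m m' : Fin L → Fin 3, breakdownCharge L m = breakdownCharge L m' →
      Relation.ReflTransGen (breakdownMove L) m m')
    (m m' : Fin L → Fin 3) (h : breakdownCharge L m + 1 = breakdownCharge L m') :
    Relation.ReflTransGen (breakdownMove (L + 1)) (Fin.cons 2 m) (Fin.cons 0 m') := by
  obtain ⟨p, hp⟩ := exists_raise m' (by omega)
  have hc := breakdownCharge_eq_of_conn hp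
  simp only [breakdownCharge_cons, Fin.val_zero, Fin.val_two] at hc
  exact (breakdownConn_cons 2 (ih m p (by omega))).trans (breakdownConn_symm hp)

lemma breakdownConn_of_charge_eq {L : ℕ} (n n' : Fin L → Fin 3)
    (h : breakdownCharge L n = breakdownCharge L n') :
    Relation.ReflTransGen (breakdownMove L) n n' := by
  induction L with
  | zero => rw [Subsingleton.elim n n']
  | succ L ih =>
    obtain ⟨a, m, rfl⟩ : ∃ b r, n = Fin.cons b r :=
      ⟨n 0, Fin.tail n, (Fin.cons_self_tail n).symm⟩
    obtain ⟨a', m', rfl⟩ : ∃ b r, n' = Fin.cons b r :=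
      ⟨n' 0, Fin.tail n', (Fin.cons_self_tail n').symm⟩
    rw [breakdownCharge_cons, breakdownCharge_cons] at h
    have ha := a.isLt
    have ha' := a'.isLt
    obtain h1 | ⟨h1, h2⟩ | ⟨h1, h2⟩ : (a : ℕ) = a' ∨ ((a : ℕ) = 2 ∧ (a' : ℕ) = 0) ∨
        ((a : ℕ) = 0 ∧ (a' : ℕ) = 2) := by omega
    · obtain rfl : a = a' := Fin.ext h1
      exact breakdownConn_cons a (ih m m' (by omega))
    · obtain rfl : a = 2 := Fin.ext h1
      obtain rfl : a' = 0 := Fin.ext h2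
      exact breakdownConn_two_zero ih m m' (by omega)
    · obtain rfl : a = 0 := Fin.ext h1
      obtain rfl : a' = 2 := Fin.ext h2
      exact breakdownConn_symm (breakdownConn_two_zero ih m' m (by omega))

/-- Two configurations of the spin-1 breakdown chain are connected by a finite
sequence of elementary breakdown moves iff they have the same charge: the dynamics
is fully ergodic within each charge sector, so Krylov sectors are charge sectors. -/
theorem breakdown_connected_iff_same_charge (L : ℕ) (n n' : Fin L → Fin 3) :
    Relation.ReflTransGen (breakdownMove L) n n' ↔
      breakdownCharge L n = breakdownCharge L n' := by
  exact ⟨breakdownCharge_eq_of_conn, breakdownConn_of_charge_eq n n'⟩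
end

section
/- For every L ≥ 1, the half-filling sector of the spin-1 breakdown model is one-dimensional: N_L(2^L − 1) = 1, and the unique configuration n : {1,…,L} → {0,1,2} with charge Σ_{i=1}^{L} 2^{i-1} n_i = 2^L − 1 is the constant configuration n_i = 1 for all i. -/
/-- `sectorDim L Q` is the number of length-`L` configurations with charge `Q`,
i.e. the dimension of the Krylov sector `K_Q` of the spin-1 breakdown model. -/
def sectorDim (L Q : ℕ) : ℕ :=
  (Finset.univ.filter fun n : Fin L → Fin 3 => breakdownCharge L n = Q).card

theorem breakdownCharge_succ (L : ℕ) (n : Fin (L + 1) → Fin 3) :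
    breakdownCharge (L + 1) n = (n 0 : ℕ) + 2 * breakdownCharge L (fun i => n i.succ) := by
  simp only [breakdownCharge, Fin.sum_univ_succ, Finset.mul_sum, Fin.val_zero, Fin.val_succ,
    pow_zero, one_mul, pow_succ']
  simp only [mul_assoc]

theorem breakdownCharge_eq_iff (L : ℕ) (n : Fin L → Fin 3) :
    breakdownCharge L n = 2 ^ L - 1 ↔ n = fun _ => 1 := by
  induction L with
  | zero => exact ⟨fun _ => Subsingleton.elim _ _, fun _ => by simp [breakdownCharge]⟩
  | succ L ih =>
    have hpos : 0 < 2 ^ L := by positivity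
    have hlt := (n 0).isLt
    rw [breakdownCharge_succ, pow_succ]
    constructor
    · intro h
      have h0 : n 0 = 1 := Fin.ext (by rw [Fin.val_one]; omega)
      have ht := (ih fun i => n i.succ).1 (by omega)
      funext i
      refine Fin.cases h0 (fun j => congrFun ht j) i
    · rintro rfl
      rw [(ih _).2 rfl, Fin.val_one]
      omega

/-- The half-filling sector of the spin-1 breakdown model is one-dimensional:
`N_L(2^L - 1) = 1`, and the unique configuration with charge `2^L - 1` is the
constant configuration `n ≡ 1`. -/
theorem sectorDim_half_filling (L : ℕ) (hL : 1 ≤ L) :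
    sectorDim L (2 ^ L - 1) = 1 ∧
      ∀ n : Fin L → Fin 3, breakdownCharge L n = 2 ^ L - 1 → n = fun _ => 1 := by
  refine ⟨?_, fun n => (breakdownCharge_eq_iff L n).1⟩
  simp only [sectorDim, breakdownCharge_eq_iff]
  exact Finset.card_eq_one.2 ⟨fun _ => 1, by ext; simp⟩
end

section
/- Let A = {i_l, i_l + 1, …, i_r} be a contiguous block of |A| = i_r − i_l + 1 sites inside a chain of M sites, and for a configuration n : {1,…,M} → {0,1,2} let Q_A(n) = Σ_{j=0}^{|A|−1} 2^{j} n_{i_l + j} denote the subsystem charge of A. If two configurations n and n' have equal total charge Σ_{i=1}^{M} 2^{i-1} n_i = Σ_{i=1}^{M} 2^{i-1} n'_i (as is the case whenever they are connected by the charge-conserving breakdown dynamics), then there exist integers a, b ∈ {−1, 0, 1} with Q_A(n') − Q_A(n) = a + b·2^{|A|}. In particular, the complement of A can exchange at most one particle with A across each of its two ends, no matter how large the full system is. -/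
/-!
Write `d k = n' k - n k`, so that `|d k| ≤ 2` and `∑ 2 ^ k * d k = 0` over the chain. For each
bond `m`, the partial sum of `2 ^ k * d k` over `k < m` is minus the sum over `k ≥ m`, hence
divisible by `2 ^ m`; its absolute value is at most `2 * (2 ^ m - 1) < 2 * 2 ^ m`, so it equals
`c * 2 ^ m` with `c ∈ {-1, 0, 1}` (`exists_carry`). The change of the block charge, times `2 ^ il`,
is the difference of these partial sums at the two ends of the block; dividing by `2 ^ il` gives
the claim, with the two carries as (up to sign) `a` and `b`.
-/

/-- The subsystem charge of the contiguous block `A = {il, il+1, …, ir}` (0-indexed)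
inside a spin-1 breakdown chain of `M` sites:
`Q_A(n) = ∑_{j=0}^{|A|-1} 2^j n_{il+j}` where `|A| = ir - il + 1`. -/
def subCharge (M il ir : ℕ) (hle : il ≤ ir) (hir : ir < M) (n : Fin M → Fin 3) : ℕ :=
  ∑ j : Fin (ir - il + 1), 2 ^ (j : ℕ) *
    (n ⟨il + (j : ℕ), by have hj := j.isLt; omega⟩ : ℕ)

/-- The carry across the bond between sites `m - 1` and `m`: if the signed digits `d` have
absolute value at most `2` and total weight zero, the weight to the left of the bond is
`c * 2 ^ m` with `c ∈ {-1, 0, 1}`. -/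
theorem exists_carry (d : ℕ → ℤ) (hd : ∀ k, |d k| ≤ 2) (M m : ℕ) (hm : m ≤ M)
    (h0 : ∑ k ∈ Finset.range M, 2 ^ k * d k = 0) :
    ∃ c : ℤ, (c = -1 ∨ c = 0 ∨ c = 1) ∧
      ∑ k ∈ Finset.range m, 2 ^ k * d k = c * 2 ^ m := by
  have hbound : |∑ k ∈ Finset.range m, 2 ^ k * d k| < 2 * 2 ^ m := by
    have key : ∀ m : ℕ, |∑ k ∈ Finset.range m, 2 ^ k * d k| ≤ 2 * 2 ^ m - 2 := by
      intro m
      induction m with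
      | zero => simp
      | succ m ih =>
        rw [Finset.sum_range_succ]
        have h1 : |(2 : ℤ) ^ m * d m| ≤ 2 ^ m * 2 := by
          rw [abs_mul, abs_of_pos (by positivity : (0 : ℤ) < 2 ^ m)]
          exact mul_le_mul_of_nonneg_left (hd m) (by positivity)
        calc _ ≤ _ := abs_add_le _ _
          _ ≤ (2 * 2 ^ m - 2) + 2 ^ m * 2 := add_le_add ih h1
          _ = _ := by ring
    linarith [key m]
  have hdvd : (2 : ℤ) ^ m ∣ ∑ k ∈ Finset.range m, 2 ^ k * d k := by
    have hsplit := Finset.sum_range_add_sum_Ico (fun k => (2 : ℤ) ^ k * d k) hm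
    rw [h0] at hsplit
    rw [eq_neg_of_add_eq_zero_left hsplit, dvd_neg]
    exact Finset.dvd_sum fun k hk =>
      Dvd.dvd.mul_right (pow_dvd_pow 2 (Finset.mem_Ico.mp hk).1) _
  obtain ⟨c, hc⟩ := hdvd
  refine ⟨c, ?_, by rw [hc, mul_comm]⟩
  have hpos : (0 : ℤ) < 2 ^ m := by positivity
  rw [hc, abs_mul, abs_of_pos hpos, mul_comm] at hbound
  have := abs_lt.mp (lt_of_mul_lt_mul_right hbound hpos.le)
  omega

/-- If two configurations of the spin-1 breakdown chain have equal total charge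
(as is the case whenever they are connected by the charge-conserving breakdown
dynamics), then the subsystem charge of a contiguous block `A` can only change by
`a + b·2^(|A|)` with `a, b ∈ {-1, 0, 1}`: the complement of `A` can exchange at most
one particle with `A` across each of its two ends, no matter how large the full
system is. -/
theorem subCharge_change_bounded (M il ir : ℕ) (hle : il ≤ ir) (hir : ir < M)
    (n n' : Fin M → Fin 3)
    (hQ : ∑ i : Fin M, 2 ^ (i : ℕ) * (n i : ℕ) =
          ∑ i : Fin M, 2 ^ (i : ℕ) * (n' i : ℕ)) :
    ∃ a b : ℤ, (a = -1 ∨ a = 0 ∨ a = 1) ∧ (b = -1 ∨ b = 0 ∨ b = 1) ∧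
      (subCharge M il ir hle hir n' : ℤ) - (subCharge M il ir hle hir n : ℤ) =
        a + b * 2 ^ (ir - il + 1) := by
  -- Extending the difference by zero past the chain turns every sum into one over `ℕ`.
  let d : ℕ → ℤ := fun k => if h : k < M then ((n' ⟨k, h⟩ : ℕ) : ℤ) - ((n ⟨k, h⟩ : ℕ) : ℤ) else 0
  have hdk : ∀ k (h : k < M), d k = ((n' ⟨k, h⟩ : ℕ) : ℤ) - ((n ⟨k, h⟩ : ℕ) : ℤ) :=
    fun k h => dif_pos h
  have hd : ∀ k, |d k| ≤ 2 := by
    intro k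
    by_cases h : k < M
    · rw [hdk k h, abs_le]
      have h1 := (n ⟨k, h⟩).isLt
      have h2 := (n' ⟨k, h⟩).isLt
      omega
    · simp [d, h]
  have h0 : ∑ k ∈ Finset.range M, 2 ^ k * d k = 0 := by
    have hQ' : (∑ i : Fin M, 2 ^ (i : ℕ) * ((n i : ℕ) : ℤ)) =
        ∑ i : Fin M, 2 ^ (i : ℕ) * ((n' i : ℕ) : ℤ) := by exact_mod_cast hQ
    rw [← Fin.sum_univ_eq_sum_range (fun k => (2 : ℤ) ^ k * d k),
      ← sub_eq_zero.mpr hQ'.symm, ← Finset.sum_sub_distrib]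
    refine Finset.sum_congr rfl fun i _ => ?_
    rw [hdk i i.isLt, mul_sub]
  obtain ⟨a, ha, hSa⟩ := exists_carry d hd M il (by omega) h0
  obtain ⟨b, hb, hSb⟩ := exists_carry d hd M (il + (ir - il + 1)) (by omega) h0
  refine ⟨-a, b, by omega, hb, ?_⟩
  have hD : (subCharge M il ir hle hir n' : ℤ) - (subCharge M il ir hle hir n : ℤ) =
      ∑ j ∈ Finset.range (ir - il + 1), 2 ^ j * d (il + j) := by
    rw [← Fin.sum_univ_eq_sum_range (fun j => (2 : ℤ) ^ j * d (il + j))]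
    unfold subCharge
    push_cast
    rw [← Finset.sum_sub_distrib]
    refine Finset.sum_congr rfl fun j _ => ?_
    rw [hdk (il + j) (by omega), mul_sub]
  rw [hD]
  rw [Finset.sum_range_add, hSa] at hSb
  simp only [pow_add (2 : ℤ) il, mul_assoc] at hSb
  rw [← Finset.mul_sum] at hSb
  -- The weights in the chain and in the block differ by the factor `2 ^ il`.
  have hpos : (2 : ℤ) ^ il ≠ 0 := by positivity
  apply mul_left_cancel₀ hpos
  linear_combination hSb
end

section
/- In the range-three dipole-conserving model on a chain of L ≥ 3 sites, the rightmost site can never take both values + and − within a single Krylov sector: there do not exist configurations s, s' : {1,…,L} → {−1, 0, +1} that are connected by a finite sequence of elementary range-three dipole moves and satisfy s(L) = +1 and s'(L) = −1. -/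
/-!
The sign of the rightmost nonzero charge is conserved. Each elementary move replaces a window of
three sites by another one, both windows contain a nonzero charge, and the rightmost nonzero charge
of the window has the same sign before and after: `0-0` and `-+-` end in `-`, `0+0` and `+-+` in
`+`, `0-+` and `-+0` in `+`, `0+-` and `+-0` in `-`. As nothing changes outside the window, the
rightmost nonzero charge of the whole chain keeps its sign (`RightmostPos.of_dipoleMove`). If
`s(L) = +1`, this charge is positive throughout the sector, and `s'(L) = -1` would make it negative.
-/


/-- One elementary range-three dipole-conserving move, in the "forward" direction:
at three consecutive sites `(i, i+1, i+2)`, replace the pattern `(0,-,0)` by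
`(-,+,-)`, `(0,+,0)` by `(+,-,+)`, `(0,-,+)` by `(-,+,0)`, or `(0,+,-)` by
`(+,-,0)`; all other sites are unchanged. -/
def dipoleMoveFwd (L : ℕ) (s s' : Fin L → ℤ) : Prop :=
  ∃ (i : ℕ) (h : i + 2 < L),
    (∀ k : Fin L, (k : ℕ) ≠ i → (k : ℕ) ≠ i + 1 → (k : ℕ) ≠ i + 2 → s' k = s k) ∧
    ((s ⟨i, by omega⟩, s ⟨i + 1, by omega⟩, s ⟨i + 2, h⟩) = ((0 : ℤ), -1, 0) ∧
        (s' ⟨i, by omega⟩, s' ⟨i + 1, by omega⟩, s' ⟨i + 2, h⟩) = ((-1 : ℤ), 1, -1) ∨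
     (s ⟨i, by omega⟩, s ⟨i + 1, by omega⟩, s ⟨i + 2, h⟩) = ((0 : ℤ), 1, 0) ∧
        (s' ⟨i, by omega⟩, s' ⟨i + 1, by omega⟩, s' ⟨i + 2, h⟩) = ((1 : ℤ), -1, 1) ∨
     (s ⟨i, by omega⟩, s ⟨i + 1, by omega⟩, s ⟨i + 2, h⟩) = ((0 : ℤ), -1, 1) ∧
        (s' ⟨i, by omega⟩, s' ⟨i + 1, by omega⟩, s' ⟨i + 2, h⟩) = ((-1 : ℤ), 1, 0) ∨
     (s ⟨i, by omega⟩, s ⟨i + 1, by omega⟩, s ⟨i + 2, h⟩) = ((0 : ℤ), 1, -1) ∧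
        (s' ⟨i, by omega⟩, s' ⟨i + 1, by omega⟩, s' ⟨i + 2, h⟩) = ((1 : ℤ), -1, 0))

/-- One elementary range-three dipole-conserving move (in either direction). -/
def dipoleMove (L : ℕ) (s s' : Fin L → ℤ) : Prop :=
  dipoleMoveFwd L s s' ∨ dipoleMoveFwd L s' s

/-- Two configurations are connected if one is obtained from the other by a finite
sequence of elementary range-three dipole moves. -/
def dipoleConnected (L : ℕ) : (Fin L → ℤ) → (Fin L → ℤ) → Prop :=
  Relation.ReflTransGen (dipoleMove L)

/-- The rightmost nonzero charge of `s` exists and equals `+1`. -/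
def RightmostPos (L : ℕ) (s : Fin L → ℤ) : Prop :=
  ∃ k : Fin L, s k = 1 ∧ ∀ j : Fin L, k < j → s j = 0

/-- `RightmostPos` is unaffected by changing sites at positions up to `i + 2` only, provided that
both configurations have their last nonzero charge among sites `i`, `i + 1`, `i + 2` (at `a`,
respectively `b`), with the same value. -/
lemma RightmostPos.of_window {L : ℕ} {s s' : Fin L → ℤ} {i : ℕ} (a b : Fin L)
    (hout : ∀ k : Fin L, i + 2 < (k : ℕ) → s' k = s k)
    (hai : (a : ℕ) ≤ i + 2)
    (hb : ∀ j : Fin L, b < j → (j : ℕ) ≤ i + 2 → s' j = 0)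
    (ha : ∀ j : Fin L, a < j → (j : ℕ) ≤ i + 2 → s j = 0)
    (hab : s' b = s a) (hne : s a ≠ 0) (h : RightmostPos L s) : RightmostPos L s' := by
  obtain ⟨k, hk, hz⟩ := h
  by_cases hki : i + 2 < (k : ℕ)
  · refine ⟨k, by rw [hout k hki, hk], fun j hj => ?_⟩
    rw [hout j (lt_trans hki hj), hz j hj]
  · -- a last charge inside or left of the window can only be the window's own last charge
    have hka : k = a := by
      rcases lt_trichotomy k a with hlt | heq | hgt
      · exact absurd (hz a hlt) hne
      · exact heq
      · have := ha k hgt (by omega)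
        omega
    subst hka
    refine ⟨b, by rw [hab, hk], fun j hj => ?_⟩
    by_cases hji : i + 2 < (j : ℕ)
    · rw [hout j hji, hz j (Fin.lt_def.mpr (by omega))]
    · exact hb j hj (by omega)

/-- For a forward move the hypotheses of `RightmostPos.of_window` hold with a suitable choice of
the positions `a` and `b` of the last nonzero charges in the two windows. -/
lemma rightmostPos_iff_of_dipoleMoveFwd {L : ℕ} {s s' : Fin L → ℤ} (h : dipoleMoveFwd L s s') :
    RightmostPos L s ↔ RightmostPos L s' := by
  obtain ⟨i, hi, hout, hpat⟩ := h
  have hout' : ∀ k : Fin L, i + 2 < (k : ℕ) → s' k = s k := fun k hk =>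
    hout k (by omega) (by omega) (by omega)
  have last (t : Fin L → ℤ) (j : Fin L) (h1 : (⟨i + 1, by omega⟩ : Fin L) < j)
      (h2 : (j : ℕ) ≤ i + 2) (h0 : t ⟨i + 2, hi⟩ = 0) : t j = 0 := by
    have : j = ⟨i + 2, hi⟩ := Fin.ext (by have := Fin.lt_def.mp h1; simp at this ⊢; omega)
    rw [this, h0]
  have none (t : Fin L → ℤ) (j : Fin L) (h1 : (⟨i + 2, hi⟩ : Fin L) < j)
      (h2 : (j : ℕ) ≤ i + 2) : t j = 0 := by
    have := Fin.lt_def.mp h1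
    simp at this
    omega
  have key (a b : Fin L) (hai : (a : ℕ) ≤ i + 2) (hbi : (b : ℕ) ≤ i + 2)
      (ha : ∀ j : Fin L, a < j → (j : ℕ) ≤ i + 2 → s j = 0)
      (hb : ∀ j : Fin L, b < j → (j : ℕ) ≤ i + 2 → s' j = 0)
      (hab : s' b = s a) (hne : s a ≠ 0) : RightmostPos L s ↔ RightmostPos L s' :=
    ⟨.of_window a b hout' hai hb ha hab hne,
      .of_window b a (fun k hk => (hout' k hk).symm) hbi ha hb hab.symm (hab ▸ hne)⟩
  simp only [Prod.mk.injEq] at hpat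
  rcases hpat with ⟨⟨_, h1, h2⟩, _, h1', h2'⟩ | ⟨⟨_, h1, h2⟩, _, h1', h2'⟩ |
    ⟨⟨_, h1, h2⟩, _, h1', h2'⟩ | ⟨⟨_, h1, h2⟩, _, h1', h2'⟩
  · exact key ⟨i + 1, by omega⟩ ⟨i + 2, hi⟩ (by simp) le_rfl
      (fun j hj hj' => last s j hj hj' h2) (none s') (by rw [h1, h2']) (by rw [h1]; decide)
  · exact key ⟨i + 1, by omega⟩ ⟨i + 2, hi⟩ (by simp) le_rfl
      (fun j hj hj' => last s j hj hj' h2) (none s') (by rw [h1, h2']) (by rw [h1]; decide)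
  · exact key ⟨i + 2, hi⟩ ⟨i + 1, by omega⟩ le_rfl (by simp)
      (none s) (fun j hj hj' => last s' j hj hj' h2') (by rw [h2, h1']) (by rw [h2]; decide)
  · exact key ⟨i + 2, hi⟩ ⟨i + 1, by omega⟩ le_rfl (by simp)
      (none s) (fun j hj hj' => last s' j hj hj' h2') (by rw [h2, h1']) (by rw [h2]; decide)

lemma RightmostPos.of_dipoleMove {L : ℕ} {s s' : Fin L → ℤ} (h : RightmostPos L s)
    (hm : dipoleMove L s s') : RightmostPos L s' :=
  hm.elim (fun hf => (rightmostPos_iff_of_dipoleMoveFwd hf).mp h)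
    (fun hf => (rightmostPos_iff_of_dipoleMoveFwd hf).mpr h)

/-- In the range-three dipole-conserving model on a chain of `L ≥ 3` sites, the
rightmost site can never take both values `+` and `-` within a single Krylov
sector: there are no configurations `s, s'` with values in `{-1, 0, +1}` that are
connected by a finite sequence of elementary moves and satisfy `s(L) = +1`,
`s'(L) = -1`. -/
theorem dipole_boundary_site_rigid (L : ℕ) (hL : 3 ≤ L) :
    ¬ ∃ s s' : Fin L → ℤ,
        (∀ i, s i = -1 ∨ s i = 0 ∨ s i = 1) ∧
        (∀ i, s' i = -1 ∨ s' i = 0 ∨ s' i = 1) ∧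
        dipoleConnected L s s' ∧
        s ⟨L - 1, by omega⟩ = 1 ∧ s' ⟨L - 1, by omega⟩ = -1 := by
  rintro ⟨s, s', -, -, hconn, hs, hs'⟩
  have hpos : RightmostPos L s := by
    refine ⟨_, hs, fun j hj => ?_⟩
    have := Fin.lt_def.mp hj
    simp at this
    omega
  have hpos' : RightmostPos L s' := by
    unfold dipoleConnected at hconn
    clear hs'
    induction hconn with
    | refl => exact hpos
    | tail _ hm ih => exact ih.of_dipoleMove hm
  obtain ⟨k, hk, hz⟩ := hpos'
  rcases lt_or_ge k ⟨L - 1, by omega⟩ with hlt | hge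
  · have := hz _ hlt
    omega
  · have : k = ⟨L - 1, by omega⟩ :=
      Fin.ext (by have := Fin.le_def.mp hge; simp at this ⊢; omega)
    rw [this] at hk
    omega
end

section
/- In the range-three dipole-conserving model, the amount of charge transferred across any cut of the chain is at most 2: if configurations s, s' : {1,…,L} → {−1, 0, +1} are connected by a finite sequence of elementary range-three dipole moves, then for every cut position 1 ≤ k < L, the total charge to the right of the cut satisfies |Σ_{i>k} s'(i) − Σ_{i>k} s(i)| ≤ 2, no matter how long the sequence of moves or how large the system. -/
/-- The total charge of `s` on the sites `i ≥ n`; it is `0` for `n ≥ L`. -/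
def tailCharge {L : ℕ} (s : Fin L → ℤ) (n : ℕ) : ℤ :=
  ∑ i ∈ Finset.univ.filter fun i : Fin L => n ≤ (i : ℕ), s i

/-- The permutation `π` of positions carries the word `T` to the word `T'`, and it reverses the order
of two entries only if their values differ by at most `1`. -/
def Rearranges (T T' : ℕ → ℤ) (π : Equiv.Perm ℕ) : Prop :=
  (∀ x, T' (π x) = T x) ∧ ∀ x y, x < y → π y < π x → |T x - T y| ≤ 1

/-- If a permutation of `ℕ` carries some `y > k` to `k` and `k` to the left of `k`, then some entry
to the left of `k` is carried to the right of `k`. -/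
lemma exists_lt_and_lt_map (π : Equiv.Perm ℕ) {k y : ℕ} (hy : k < y) (hyk : π y = k)
    (hk : π k < k) : ∃ z < k, k < π z := by
  by_contra! h
  have hmaps : ∀ z ∈ Finset.Iic k, π z ∈ Finset.Iio k := by
    intro z hz
    rw [Finset.mem_Iic] at hz
    rw [Finset.mem_Iio]
    rcases hz.lt_or_eq with hz | rfl
    · have hne : π z ≠ k := fun e => by
        have := π.injective (e.trans hyk.symm)
        omega
      have := h z hz
      omega
    · exact hk
  have hcard := Finset.card_le_card_of_injOn π hmaps π.injective.injOn
  simp at hcard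

/-- The mirror image of `exists_lt_and_lt_map`. Here the sets to either side of `k` are not both
finite, so the counting is done for `π⁻¹` on the positions up to `k`. -/
lemma exists_gt_and_map_lt (π : Equiv.Perm ℕ) {k y : ℕ} (hy : y < k) (hyk : π y = k)
    (hk : k < π k) : ∃ z, k < z ∧ π z < k := by
  by_contra! h
  have hmaps : ∀ z ∈ Finset.Iic k, π.symm z ∈ Finset.Iio k := by
    intro z hz
    rw [Finset.mem_Iic] at hz
    rw [Finset.mem_Iio]
    by_contra! hc
    have hz' : π (π.symm z) = z := π.apply_symm_apply z
    rcases hc.lt_or_eq with hc | hc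
    · have h1 := h _ hc
      rw [hz'] at h1
      obtain rfl : z = k := le_antisymm hz h1
      have := π.injective (hz'.trans hyk.symm)
      omega
    · rw [← hc] at hz'
      omega
  have hcard := Finset.card_le_card_of_injOn π.symm hmaps π.symm.injective.injOn
  simp at hcard

lemma Rearranges.abs_sub_le_two {T T' : ℕ → ℤ} {π : Equiv.Perm ℕ} (h : Rearranges T T' π)
    (k : ℕ) : |T' k - T k| ≤ 2 := by
  obtain ⟨hT, hinv⟩ := h
  -- `y` is the initial position of the entry which ends up at `k`.
  obtain ⟨y, hy⟩ := π.surjective k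
  have hTy : T' k = T y := by rw [← hy, hT]
  rw [hTy]
  have hxy : k ≠ y → π k ≠ k := fun hne e => hne (π.injective (e.trans hy.symm))
  rcases lt_trichotomy k y with hlt | rfl | hlt
  · rcases lt_or_gt_of_ne (hxy hlt.ne) with hk | hk
    · obtain ⟨z, hzk, hz⟩ := exists_lt_and_lt_map π hlt hy hk
      have h1 := hinv z k hzk (by omega)
      have h2 := hinv z y (by omega) (by omega)
      rw [abs_le] at *
      omega
    · have h1 := hinv k y hlt (by omega)
      rw [abs_le] at *
      omega
  · simp
  · rcases lt_or_gt_of_ne (hxy hlt.ne') with hk | hk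
    · have h1 := hinv y k hlt (by omega)
      rw [abs_le] at *
      omega
    · obtain ⟨z, hzk, hz⟩ := exists_gt_and_map_lt π hlt hy hk
      have h1 := hinv k z hzk (by omega)
      have h2 := hinv y z (by omega) (by omega)
      rw [abs_le] at *
      omega

lemma Rearranges.swap {T T' T'' : ℕ → ℤ} {π : Equiv.Perm ℕ} (h : Rearranges T T' π) {j : ℕ}
    (hj : |T' j - T' (j + 1)| ≤ 1) (hT'' : ∀ n, T'' n = T' (Equiv.swap j (j + 1) n)) :
    Rearranges T T'' (Equiv.swap j (j + 1) * π) := by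
  obtain ⟨hT, hinv⟩ := h
  refine ⟨fun x => by rw [hT'', Equiv.Perm.mul_apply, Equiv.swap_apply_self, hT], ?_⟩
  intro x y hxy hlt
  by_cases hπ : π y < π x
  · exact hinv x y hxy hπ
  -- An adjacent transposition creates no inversion other than that of `j` and `j + 1`.
  · have hne : π x ≠ π y := fun e => hxy.ne (π.injective e)
    have key : π x = j ∧ π y = j + 1 := by
      simp only [Equiv.Perm.mul_apply, Equiv.swap_apply_def] at hlt
      split_ifs at hlt <;> omega
    rw [← hT x, ← hT y, key.1, key.2]
    exact hj

lemma tailCharge_succ {L : ℕ} (s : Fin L → ℤ) (n : ℕ) (hn : n < L) :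
    tailCharge s n = s ⟨n, hn⟩ + tailCharge s (n + 1) := by
  unfold tailCharge
  have : (Finset.univ.filter fun i : Fin L => n ≤ (i : ℕ)) =
      insert ⟨n, hn⟩ (Finset.univ.filter fun i : Fin L => n + 1 ≤ (i : ℕ)) := by
    ext i
    simp only [Finset.mem_filter, Finset.mem_univ, true_and, Finset.mem_insert, Fin.ext_iff]
    omega
  rw [this, Finset.sum_insert (by simp)]

/-- Adding `(c, -2c, c)` at three consecutive sites `i, i+1, i+2` changes the tail charge by `-c` at
`i+1`, by `c` at `i+2`, and nowhere else. -/
lemma tailCharge_of_second_difference {L : ℕ} {s s' : Fin L → ℤ} {i : ℕ} (h : i + 2 < L) {c : ℤ}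
    (hoff : ∀ k : Fin L, (k : ℕ) ≠ i → (k : ℕ) ≠ i + 1 → (k : ℕ) ≠ i + 2 → s' k = s k)
    (h0 : s' ⟨i, by omega⟩ = s ⟨i, by omega⟩ + c)
    (h1 : s' ⟨i + 1, by omega⟩ = s ⟨i + 1, by omega⟩ - 2 * c)
    (h2 : s' ⟨i + 2, h⟩ = s ⟨i + 2, h⟩ + c) (n : ℕ) :
    tailCharge s' n =
      tailCharge s n + (if n = i + 1 then -c else 0) + (if n = i + 2 then c else 0) := by
  have hdiff : ∀ k : Fin L, s' k = s k + (if k = ⟨i, by omega⟩ then c else 0)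
      + (if k = ⟨i + 1, by omega⟩ then -2 * c else 0) + (if k = ⟨i + 2, h⟩ then c else 0) := by
    rintro ⟨k, hk⟩
    simp only [Fin.mk.injEq]
    by_cases e0 : k = i
    · subst e0; simp [h0]
    by_cases e1 : k = i + 1
    · subst e1; simp [h1]; ring
    by_cases e2 : k = i + 2
    · subst e2; simp [h2]
    simp [e0, e1, e2, hoff ⟨k, hk⟩ e0 e1 e2]
  unfold tailCharge
  rw [Finset.sum_congr rfl fun k _ => hdiff k]
  simp only [Finset.sum_add_distrib, Finset.sum_ite_eq', Finset.mem_filter, Finset.mem_univ,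
    true_and]
  split_ifs <;> omega

lemma tailCharge_of_dipoleMoveFwd {L : ℕ} {s s' : Fin L → ℤ} (h : dipoleMoveFwd L s s') :
    ∃ j, |tailCharge s j - tailCharge s (j + 1)| ≤ 1 ∧
      ∀ n, tailCharge s' n = tailCharge s (Equiv.swap j (j + 1) n) := by
  obtain ⟨i, hi, hoff, hpat⟩ := h
  simp only [Prod.mk.injEq] at hpat
  -- The sign `c` with which `(1, -2, 1)` is added is the charge of the middle site before the move.
  obtain ⟨c, hc, hm, h0, h1, h2⟩ : ∃ c : ℤ, |c| ≤ 1 ∧ s ⟨i + 1, by omega⟩ = c ∧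
      s' ⟨i, by omega⟩ = s ⟨i, by omega⟩ + c ∧
      s' ⟨i + 1, by omega⟩ = s ⟨i + 1, by omega⟩ - 2 * c ∧
      s' ⟨i + 2, hi⟩ = s ⟨i + 2, hi⟩ + c := by
    refine ⟨s ⟨i + 1, by omega⟩, ?_, rfl, ?_⟩
    · rw [abs_le]; omega
    · omega
  have hT := tailCharge_succ s (i + 1) (by omega)
  rw [hm] at hT
  refine ⟨i + 1, by rw [hT]; simpa using hc, fun n => ?_⟩
  rw [tailCharge_of_second_difference hi hoff h0 h1 h2 n, Equiv.swap_apply_def]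
  by_cases e1 : n = i + 1
  · subst e1; simp [hT]
  by_cases e2 : n = i + 2
  · subst e2; simp [hT]; ring
  simp [e1, e2]

/-- An elementary move exchanges two adjacent values of the tail charge, which differ by at most
`1`. -/
lemma tailCharge_of_dipoleMove {L : ℕ} {s s' : Fin L → ℤ} (h : dipoleMove L s s') :
    ∃ j, |tailCharge s j - tailCharge s (j + 1)| ≤ 1 ∧
      ∀ n, tailCharge s' n = tailCharge s (Equiv.swap j (j + 1) n) := by
  rcases h with h | h
  · exact tailCharge_of_dipoleMoveFwd h
  · obtain ⟨j, hj, hT⟩ := tailCharge_of_dipoleMoveFwd h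
    refine ⟨j, ?_, fun n => by rw [hT, Equiv.swap_apply_self]⟩
    rw [hT j, hT (j + 1), Equiv.swap_apply_left, Equiv.swap_apply_right, abs_sub_comm]
    exact hj

lemma exists_rearranges_of_dipoleConnected {L : ℕ} {s s' : Fin L → ℤ}
    (h : dipoleConnected L s s') : ∃ π, Rearranges (tailCharge s) (tailCharge s') π := by
  induction h with
  | refl => exact ⟨1, fun _ => rfl, fun x y hxy hyx => absurd hyx hxy.not_gt⟩
  | tail _ hmove ih =>
    obtain ⟨π, hπ⟩ := ih
    obtain ⟨j, hj, hT⟩ := tailCharge_of_dipoleMove hmove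
    exact ⟨_, hπ.swap hj hT⟩

/-- In the range-three dipole-conserving model, the amount of charge transferred
across any cut of the chain is at most 2: if `s` and `s'` are connected
configurations (with values in `{-1,0,+1}`), then for every cut position
`1 ≤ k < L`, the total charge strictly to the right of the cut changes by at most
`2` in absolute value, no matter how long the sequence of moves or how large the
system. -/
theorem dipole_charge_transfer_le_two (L : ℕ) (s s' : Fin L → ℤ)
    (hs : ∀ i, s i = -1 ∨ s i = 0 ∨ s i = 1)
    (hs' : ∀ i, s' i = -1 ∨ s' i = 0 ∨ s' i = 1)
    (hconn : dipoleConnected L s s') :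
    ∀ k : ℕ, 1 ≤ k → k < L →
      |(∑ i ∈ Finset.univ.filter fun i : Fin L => k ≤ (i : ℕ), s' i) -
        (∑ i ∈ Finset.univ.filter fun i : Fin L => k ≤ (i : ℕ), s i)| ≤ 2 := by
  intro k _ _
  obtain ⟨π, hπ⟩ := exists_rearranges_of_dipoleConnected hconn
  exact hπ.abs_sub_le_two k
end

section
/- Let (X, d) be a metric space with basepoint o, and for x, y ∈ X write |x| = d(x, o) and (x|y) = (d(x,o) + d(y,o) − d(x,y))/2 for the Gromov product based at o. Assume the δ-hyperbolicity four-point condition: (x|z) ≥ min((x|y), (y|z)) − δ for all x, y, z ∈ X, where δ ≥ 0. Suppose a, b, x, y ∈ X and ε ≥ 0 satisfy (a|x) ≥ |x| − ε and (b|y) ≥ |y| − ε. Then min(|x|, |y|, (a|b)) − (2δ + ε) ≤ (x|y) ≤ min(|x|, |y|, (a|b)) + (2δ + ε); equivalently, d(x,y) = |x| + |y| − 2·min((a|b), |x|, |y|) up to an additive error of at most 2(2δ + ε). -/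
/-!
Applying the four-point condition twice along a chain `p, q, r, s` gives
`(p|s) ≥ min ((p|q), (q|r), (r|s)) - 2δ`. The chain `x, a, b, y` yields the lower bound for
`(x|y)`. The chain `a, x, y, b` bounds `(a|b)` from below, and together with
`(x|y) ≤ min (|x|, |y|)`, which is the triangle inequality, this yields the upper bound.
-/

/-- The Gromov product of `x` and `y` based at `o` in a metric space. -/
noncomputable def gromovProd {X : Type*} [MetricSpace X] (o x y : X) : ℝ :=
  (dist x o + dist y o - dist x y) / 2

/-- Distance estimate in a `δ`-hyperbolic metric space (the key step in the
Bonk–Schramm-style proof that the Gromov boundary has finite Assouad dimension):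
if `(a|x) ≥ |x| - ε` and `(b|y) ≥ |y| - ε`, then
`(x|y) = min(|x|, |y|, (a|b))` up to an additive error of at most `2δ + ε`;
equivalently `d(x,y) = |x| + |y| - 2 min((a|b), |x|, |y|)` up to an additive error
of at most `2(2δ + ε)`. -/
theorem gromov_product_distance_estimate {X : Type*} [MetricSpace X] (o : X)
    (δ ε : ℝ) (hδ : 0 ≤ δ) (hε : 0 ≤ ε)
    (hhyp : ∀ x y z : X, min (gromovProd o x y) (gromovProd o y z) - δ ≤
      gromovProd o x z)
    (a b x y : X)
    (ha : dist x o - ε ≤ gromovProd o a x)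
    (hb : dist y o - ε ≤ gromovProd o b y) :
    min (min (dist x o) (dist y o)) (gromovProd o a b) - (2 * δ + ε) ≤
        gromovProd o x y ∧
      gromovProd o x y ≤
        min (min (dist x o) (dist y o)) (gromovProd o a b) + (2 * δ + ε) := by
  have hcomm : ∀ u v : X, gromovProd o u v = gromovProd o v u := fun u v => by
    simp only [gromovProd, dist_comm u v, add_comm (dist u o)]
  have hx : gromovProd o x y ≤ dist x o := by
    have := dist_triangle_left y o x
    unfold gromovProd
    linarith
  have hy : gromovProd o x y ≤ dist y o := by
    have := dist_triangle x y o
    unfold gromovProd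
    linarith
  constructor
  · -- hyperbolicity along the chain `x, a, b, y`
    have hxay := hhyp x a y
    have haby := hhyp a b y
    rw [hcomm x a] at hxay
    grind
  · -- hyperbolicity along the chain `a, x, y, b`
    have haxb := hhyp a x b
    have hxyb := hhyp x y b
    rw [hcomm y b] at hxyb
    grind
end

section
/- Let (X, d) be a metric space with the metric betweenness property: for all x, y ∈ X and every 0 ≤ s ≤ d(x,y) there exists z ∈ X with d(x,z) = s and d(z,y) = d(x,y) − s. Suppose 0 < r < R and N ≥ 1 are such that every open ball of radius R in X can be covered by N open balls of radius r. Then for every integer n ≥ 1, every open ball of radius nR − (n−1)r in X can be covered by N^n open balls of radius r. -/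
/-!
The radius `ρ n = n R - (n - 1) r` satisfies `ρ (n + 1) = ρ n + (R - r)`. By betweenness, a point
of `ball p (ρ (n + 1))` is within `R - r` of a point of `ball p (ρ n)`. If the latter ball is covered
by the balls `ball q r` with `q ∈ T`, then the former is covered by the balls `ball q R`, and
covering each of these by `N` balls of radius `r` multiplies the number of balls by `N`.
-/


/-- Iterated covering estimate: let `(X, d)` be a metric space with the metric
betweenness property (for all `x, y` and `0 ≤ s ≤ d(x,y)` there is `z` with
`d(x,z) = s` and `d(z,y) = d(x,y) - s`, as in any geodesic space).  If every open
ball of radius `R` can be covered by `N` open balls of radius `r` (with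
`0 < r < R`), then for every `n ≥ 1` every open ball of radius `nR - (n-1)r` can be
covered by `N^n` open balls of radius `r`. -/
theorem iterated_ball_covering {X : Type*} [MetricSpace X]
    (hbetween : ∀ x y : X, ∀ s : ℝ, 0 ≤ s → s ≤ dist x y →
      ∃ z : X, dist x z = s ∧ dist z y = dist x y - s)
    (r R : ℝ) (N : ℕ) (hr : 0 < r) (hrR : r < R) (hN : 1 ≤ N)
    (hcov : ∀ p : X, ∃ T : Finset X, T.card ≤ N ∧
      Metric.ball p R ⊆ ⋃ q ∈ T, Metric.ball q r) :
    ∀ n : ℕ, 1 ≤ n → ∀ p : X, ∃ T : Finset X, T.card ≤ N ^ n ∧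
      Metric.ball p ((n : ℝ) * R - ((n : ℝ) - 1) * r) ⊆ ⋃ q ∈ T, Metric.ball q r := by
  classical
  intro n hn
  induction n, hn using Nat.le_induction with
  | base => simpa using hcov
  | succ n hn ih =>
    intro p
    obtain ⟨T, hTcard, hT⟩ := ih p
    choose F hFcard hF using hcov
    refine ⟨T.biUnion F, ?_, fun x hx => ?_⟩
    · calc (T.biUnion F).card ≤ T.card * N :=
            Finset.card_biUnion_le_card_mul T F N fun q _ => hFcard q
        _ ≤ N ^ n * N := Nat.mul_le_mul_right N hTcard
        _ = N ^ (n + 1) := (pow_succ N n).symm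
    · rw [Metric.mem_ball] at hx
      push_cast at hx
      have hn' : (1 : ℝ) ≤ n := by exact_mod_cast hn
      have hpos : 0 < (n : ℝ) * R - ((n : ℝ) - 1) * r := by nlinarith
      -- Move from `x` towards `p` by `R - r`, or all the way to `p` if it is closer than that.
      obtain ⟨z, hxz, hzp⟩ := hbetween x p (min (R - r) (dist x p))
        (le_min (by linarith) dist_nonneg) (min_le_right _ _)
      have hz : z ∈ Metric.ball p ((n : ℝ) * R - ((n : ℝ) - 1) * r) := by
        rw [Metric.mem_ball, hzp]
        rcases min_choice (R - r) (dist x p) with h | h <;> rw [h] <;> linarith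
      obtain ⟨q, hq, hzq⟩ := Set.mem_iUnion₂.mp (hT hz)
      rw [Metric.mem_ball] at hzq
      have hxq : x ∈ Metric.ball q R := by
        rw [Metric.mem_ball]
        linarith [dist_triangle x z q, min_le_left (R - r) (dist x p)]
      obtain ⟨q', hq', hxq'⟩ := Set.mem_iUnion₂.mp (hF q hxq)
      exact Set.mem_iUnion₂.mpr ⟨q', Finset.mem_biUnion.mpr ⟨q, hq, hq'⟩, hxq'⟩
end
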